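/- arXiv:2310.06853 — 6 statements merged into one kernel-verified Lean document; each statement's English description precedes it below -/
import Mathlib

section
/- Let R be a commutative ring, M an R-module, and ⟨·,·⟩ : M × M → R an R-bilinear form with ⟨x,x⟩ = 0 for all x ∈ M. Then the operation x ▷ y = x + ⟨x,y⟩ • y makes M a quandle: (i) x ▷ x = x for all x ∈ M; (ii) for every y ∈ M the map x ↦ x ▷ y is a bijection of M, with inverse x ↦ x − ⟨x,y⟩ • y; (iii) (x ▷ y) ▷ z = (x ▷ z) ▷ (y ▷ z) for all x, y, z ∈ M. -/
/-!
Each right translation `x ↦ x ▷ z` is a symplectic transvection. Since `⟨z, z⟩ = 0`, it preserves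
`⟨·, z⟩`, so subtracting `⟨x, z⟩ • z` undoes it. Antisymmetry makes it a linear isometry of the
form, whence `(x ▷ z) ▷ (y ▷ z) = x ▷ z + ⟨x, y⟩ • (y ▷ z) = (x ▷ y) ▷ z`.
-/

theorem symplectic_quandle_axioms (R M : Type*) [CommRing R] [AddCommGroup M]
    [Module R M] (B : M →ₗ[R] M →ₗ[R] R) (hB : ∀ x : M, B x x = 0) :
    -- (i) idempotence: x ▷ x = x
    (∀ x : M, x + B x x • x = x) ∧
    -- (ii) right translations are bijective, with inverse x ↦ x - ⟨x,y⟩ • y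
    (∀ y : M, Function.Bijective (fun x : M => x + B x y • y) ∧
      (∀ x : M, (x + B x y • y) - B (x + B x y • y) y • y = x) ∧
      (∀ x : M, (x - B x y • y) + B (x - B x y • y) y • y = x)) ∧
    -- (iii) right self-distributivity: (x ▷ y) ▷ z = (x ▷ z) ▷ (y ▷ z)
    (∀ x y z : M,
      (x + B x y • y) + B (x + B x y • y) z • z =
        (x + B x z • z) +
          B (x + B x z • z) (y + B y z • z) • (y + B y z • z)) := by
  have hanti : ∀ x y : M, B y x = -B x y := fun x y => by
    have h := hB (x + y)
    simp only [map_add, LinearMap.add_apply, hB] at h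
    linear_combination h
  have hleft : ∀ y x : M, (x + B x y • y) - B (x + B x y • y) y • y = x := fun y x => by
    simp [hB]
  have hright : ∀ y x : M, (x - B x y • y) + B (x - B x y • y) y • y = x := fun y x => by
    simp [hB]
  refine ⟨fun x => by simp [hB], fun y => ⟨?_, hleft y, hright y⟩, fun x y z => ?_⟩
  · exact Function.bijective_iff_has_inverse.2 ⟨fun x => x - B x y • y, hleft y, hright y⟩
  · -- The transvection `x ↦ x ▷ z` is an isometry of the form.
    have hiso : B (x + B x z • z) (y + B y z • z) = B x y := by
      simp only [map_add, map_smul, LinearMap.add_apply, LinearMap.smul_apply, hB, hanti y z,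
        smul_eq_mul]
      ring
    rw [hiso]
    simp only [map_add, map_smul, LinearMap.add_apply, LinearMap.smul_apply, smul_eq_mul]
    module
end

section
/- Let F be a finite field, M a finite-dimensional F-vector space, and ⟨·,·⟩ : M × M → F a nondegenerate bilinear form with ⟨x,x⟩ = 0 for all x (nondegenerate means: if ⟨x,y⟩ = 0 for all y ∈ M then x = 0). Equip M with the symplectic quandle operation x ▷ y = x + ⟨x,y⟩ • y. Then M \ {0} is a connected subquandle: it is closed under ▷ and ▷⁻¹, and for any nonzero a, b ∈ M there is a finite sequence of operations of the form z ↦ z ▷ w or z ↦ z ▷⁻¹ w (with w ∈ M \ {0}) carrying a to b. -/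
/-!
Scaling `w` by `c` turns `z ↦ z ± ⟨z,w⟩ w` into `z ↦ z ± c² ⟨z,w⟩ w`, and operations along the
same line compose by adding coefficients. Every element of a finite field is a difference of two
squares, so every transvection `z ↦ z + t ⟨z,w⟩ w` is a composite of quandle operations
(`reach_transvection`). If `⟨a,b⟩ ≠ 0`, the transvection along `b - a` with `t = ⟨a,b⟩⁻¹` carries
`a` to `b` (`reach_of_ne`). If `⟨a,b⟩ = 0`, nondegeneracy gives an intermediate `c` that is
orthogonal to neither `a` nor `b` (`exists_nonorthogonal`).
-/

namespace SymplecticQuandle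

/-- One operation `u ▷ w` or `u ▷⁻¹ w` with `w ≠ 0` carries `u` to `v`. -/
abbrev Step {F M : Type*} [Field F] [AddCommGroup M] [Module F M]
    (B : M →ₗ[F] M →ₗ[F] F) (u v : M) : Prop :=
  ∃ w : M, w ≠ 0 ∧ (v = u + B u w • w ∨ v = u - B u w • w)

lemma exists_sq_sub_sq {F : Type*} [Field F] [Finite F] (t : F) :
    ∃ c d : F, t = c * c - d * d := by
  by_cases h2 : (2 : F) = 0
  · have : CharP F 2 := CharTwo.of_one_ne_zero_of_two_eq_zero one_ne_zero h2
    obtain ⟨c, hc⟩ := FiniteField.isSquare_of_char_two (ringChar.eq F 2) t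
    exact ⟨c, 0, by simpa using hc⟩
  · exact ⟨(t + 1) / 2, (t - 1) / 2, by field_simp; ring⟩

variable {F M : Type*} [Field F] [AddCommGroup M] [Module F M] {B : M →ₗ[F] M →ₗ[F] F}

lemma reach_add_sq (c : F) (x y : M) :
    Relation.ReflTransGen (Step B) x (x + (c * c * B x y) • y) := by
  by_cases hw : c • y = 0
  · have h : (c * c * B x y) • y = 0 := by
      rw [show c * c * B x y = (c * B x y) * c by ring, mul_smul, hw, smul_zero]
    rw [h, add_zero]
  · refine .single ⟨c • y, hw, .inl ?_⟩
    rw [map_smul, smul_eq_mul, smul_smul]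
    congr 2
    ring

lemma reach_sub_sq (c : F) (x y : M) :
    Relation.ReflTransGen (Step B) x (x - (c * c * B x y) • y) := by
  by_cases hw : c • y = 0
  · have h : (c * c * B x y) • y = 0 := by
      rw [show c * c * B x y = (c * B x y) * c by ring, mul_smul, hw, smul_zero]
    rw [h, sub_zero]
  · refine .single ⟨c • y, hw, .inr ?_⟩
    rw [map_smul, smul_eq_mul, smul_smul]
    congr 2
    ring

lemma reach_transvection [Finite F] (hB : ∀ x : M, B x x = 0) (t : F) (x y : M) :
    Relation.ReflTransGen (Step B) x (x + (t * B x y) • y) := by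
  obtain ⟨c, d, rfl⟩ := exists_sq_sub_sq t
  have h := (reach_add_sq (B := B) c x y).trans (reach_sub_sq d _ y)
  -- the first operation does not change the pairing with `y`, as `⟨y,y⟩ = 0`
  have hy : B (x + (c * c * B x y) • y) y = B x y := by simp [hB]
  rw [hy, add_sub_assoc, ← sub_smul, ← sub_mul] at h
  exact h

lemma reach_of_ne [Finite F] (hB : ∀ x : M, B x x = 0) {a b : M} (hab : B a b ≠ 0) :
    Relation.ReflTransGen (Step B) a b := by
  have h := reach_transvection hB (B a b)⁻¹ a (b - a)
  rw [map_sub, hB, sub_zero, inv_mul_cancel₀ hab, one_smul, add_sub_cancel] at h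
  exact h

/-- A vector space is not the union of the proper subspaces `a^⊥` and `b^⊥`. -/
lemma exists_nonorthogonal (hB : ∀ x : M, B x x = 0)
    (hnd : ∀ x : M, (∀ y : M, B x y = 0) → x = 0) {a b : M} (ha : a ≠ 0) (hb : b ≠ 0) :
    ∃ c : M, B a c ≠ 0 ∧ B c b ≠ 0 := by
  have anti (x y : M) : B x y = -B y x := by
    have h := hB (x + y)
    simp only [map_add, LinearMap.add_apply, hB, zero_add, add_zero] at h
    exact eq_neg_of_add_eq_zero_right h
  obtain ⟨u, hu⟩ : ∃ u, B a u ≠ 0 := by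
    by_contra! h
    exact ha (hnd a h)
  obtain ⟨v, hv⟩ : ∃ v, B b v ≠ 0 := by
    by_contra! h
    exact hb (hnd b h)
  have hv' : B v b ≠ 0 := by
    rw [anti]
    exact neg_ne_zero.mpr hv
  by_cases h1 : B u b = 0
  · by_cases h2 : B a v = 0
    · exact ⟨u + v, by simpa [h2] using hu, by simpa [h1] using hv'⟩
    · exact ⟨v, h2, hv'⟩
  · exact ⟨u, hu, h1⟩

end SymplecticQuandle

open SymplecticQuandle

theorem symplectic_quandle_nonzero_connected (F M : Type*) [Field F] [Fintype F]
    [AddCommGroup M] [Module F M] [FiniteDimensional F M]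
    (B : M →ₗ[F] M →ₗ[F] F) (hB : ∀ x : M, B x x = 0)
    (hnd : ∀ x : M, (∀ y : M, B x y = 0) → x = 0) :
    -- M \ {0} is closed under ▷ and ▷⁻¹
    (∀ x y : M, x ≠ 0 → y ≠ 0 → x + B x y • y ≠ 0 ∧ x - B x y • y ≠ 0) ∧
    -- and it is connected: any nonzero a is carried to any nonzero b by a finite
    -- sequence of operations z ↦ z ▷ w or z ↦ z ▷⁻¹ w with w ≠ 0
    (∀ a b : M, a ≠ 0 → b ≠ 0 →
      Relation.ReflTransGen
        (fun u v : M => ∃ w : M, w ≠ 0 ∧ (v = u + B u w • w ∨ v = u - B u w • w))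
        a b) := by
  refine ⟨fun x y hx _ => ⟨fun h => hx ?_, fun h => hx ?_⟩, fun a b ha hb => ?_⟩
  -- pairing `x ± ⟨x,y⟩ y = 0` with `y` gives `⟨x,y⟩ = 0`
  · have h' : B x y = 0 := by simpa [hB] using congrArg (fun z => B z y) h
    simpa [h'] using h
  · have h' : B x y = 0 := by simpa [hB] using congrArg (fun z => B z y) h
    simpa [h'] using h
  · obtain ⟨c, hac, hcb⟩ := exists_nonorthogonal hB hnd ha hb
    exact (reach_of_ne hB hac).trans (reach_of_ne hB hcb)
end

section
/- Every solution (x1,x2,x3,x4) of the Hopf system over the symplectic quandle V = (ZMod 5)² satisfies x2 = x3. -/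
abbrev V : Type := Fin 2 → ZMod 5

def op (x y : V) : V := x + (x 0 * y 1 - x 1 * y 0) • y

def HopfSys (x : Fin 4 → V) : Prop :=
  x 1 = op (x 2) (x 0) ∧
  x 2 = op (x 1) (x 3) ∧
  x 0 = op (x 0) (x 2) ∧
  x 3 = op (x 3) (x 2)

theorem hopf_x2_eq_x3 (x : Fin 4 → V) (hx : HopfSys x) : x 1 = x 2 := by
  obtain ⟨h1, -, h3, -⟩ := hx
  haveI : Fact (Nat.Prime 5) := ⟨by norm_num⟩
  -- The third relation says `⟨x 0, x 2⟩ • x 2 = 0`; over a field either factor vanishes,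
  -- and both cases give `⟨x 2, x 0⟩ = 0`, so the first relation reads `x 1 = x 2`.
  have h4 : (x 0 0 * x 2 1 - x 0 1 * x 2 0) • x 2 = 0 := left_eq_add.mp h3
  have h5 : x 2 0 * x 0 1 - x 2 1 * x 0 0 = 0 := by
    rcases smul_eq_zero.mp h4 with h | h
    · linear_combination -h
    · simp [h]
  rw [h1, op, h5, zero_smul, add_zero]
end

section
/- The number of solutions (x1,x2,x3,x4) ∈ V⁴ of the Hopf system over the symplectic quandle V = (ZMod 5)² is exactly 1225. -/
/-- The symplectic form vanishes on the pair `(x, y)`. -/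
abbrev Orth (x y : V) : Prop := x 0 * y 1 - x 1 * y 0 = 0

lemma eq_op_iff (x y : V) : x = op x y ↔ Orth x y := by
  have : Fact (Nat.Prime 5) := ⟨by norm_num⟩
  unfold op
  rw [left_eq_add, smul_eq_zero]
  constructor
  · rintro (h | rfl)
    · exact h
    · simp [Orth]
  · exact Or.inl

lemma Orth.symm {x y : V} (h : Orth x y) : Orth y x := by
  unfold Orth at *
  linear_combination -h

lemma hopfSys_iff (x : Fin 4 → V) :
    HopfSys x ↔ x 1 = x 2 ∧ Orth (x 0) (x 2) ∧ Orth (x 3) (x 2) := by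
  unfold HopfSys
  rw [← eq_op_iff (x 0), ← eq_op_iff (x 3)]
  constructor
  · rintro ⟨h1, -, h0, h3⟩
    refine ⟨?_, h0, h3⟩
    rwa [← (eq_op_iff _ _).2 ((eq_op_iff _ _).1 h0).symm] at h1
  · rintro ⟨h1, h0, h3⟩
    have e0 := (eq_op_iff _ _).2 ((eq_op_iff _ _).1 h0).symm
    have e3 := (eq_op_iff _ _).2 ((eq_op_iff _ _).1 h3).symm
    exact ⟨h1.trans e0, by rw [h1]; exact e3, h0, h3⟩

/-- A solution is determined by `x 2` and by the two vectors `x 0`, `x 3` orthogonal to it. -/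
def solutionEquiv :
    {x : Fin 4 → V // HopfSys x} ≃ Σ c : V, {a : V // Orth a c} × {a : V // Orth a c} where
  toFun x := ⟨x.1 2, ⟨x.1 0, ((hopfSys_iff _).1 x.2).2.1⟩, ⟨x.1 3, ((hopfSys_iff _).1 x.2).2.2⟩⟩
  invFun s := ⟨![s.2.1.1, s.1, s.1, s.2.2.1],
    (hopfSys_iff _).2 ⟨rfl, s.2.1.2, s.2.2.2⟩⟩
  left_inv x := by
    have h := ((hopfSys_iff _).1 x.2).1
    ext i : 2
    fin_cases i
    · rfl
    · exact h.symm
    · rfl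
    · rfl
  right_inv s := rfl

lemma card_orth (c : V) : Fintype.card {a : V // Orth a c} = if c = 0 then 25 else 5 := by
  revert c
  decide +kernel

theorem hopf_count : Nat.card {x : Fin 4 → V // HopfSys x} = 1225 := by
  rw [Nat.card_congr solutionEquiv, Nat.card_eq_fintype_card, Fintype.card_sigma]
  simp only [Fintype.card_prod, card_orth]
  decide +kernel
end

section
/- Every solution (x1,…,x45) of the L1 system over the symplectic quandle V = (ZMod 5)² satisfies x1 = x2, x3 = x4 = x5, and x26 = x27. -/
def L1Sys (x : Fin 45 → V) : Prop :=
  x 1 = op (x 0) (x 25) ∧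
  x 25 = op (x 26) (x 0) ∧
  x 0 = op (x 1) (x 2) ∧
  x 2 = op (x 3) (x 0) ∧
  x 3 = op (x 4) (x 2) ∧
  x 4 = op (x 5) (x 6) ∧
  x 7 = op (x 6) (x 5) ∧
  x 28 = op (x 27) (x 5) ∧
  x 2 = op (x 5) (x 27) ∧
  x 8 = op (x 7) (x 6) ∧
  x 6 = op (x 9) (x 8) ∧
  x 10 = op (x 8) (x 9) ∧
  x 9 = op (x 10) (x 11) ∧
  x 12 = op (x 1) (x 3) ∧
  x 11 = op (x 13) (x 12) ∧
  x 18 = op (x 14) (x 13) ∧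
  x 21 = op (x 14) (x 12) ∧
  x 19 = op (x 15) (x 13) ∧
  x 20 = op (x 15) (x 12) ∧
  x 13 = op (x 16) (x 20) ∧
  x 12 = op (x 17) (x 20) ∧
  x 19 = op (x 16) (x 21) ∧
  x 18 = op (x 17) (x 21) ∧
  x 20 = op (x 22) (x 19) ∧
  x 21 = op (x 23) (x 19) ∧
  x 25 = op (x 22) (x 18) ∧
  x 24 = op (x 23) (x 18) ∧
  x 29 = op (x 27) (x 28) ∧
  x 28 = op (x 30) (x 29) ∧
  x 31 = op (x 29) (x 30) ∧
  x 30 = op (x 32) (x 31) ∧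
  x 33 = op (x 31) (x 32) ∧
  x 32 = op (x 34) (x 33) ∧
  x 39 = op (x 35) (x 34) ∧
  x 37 = op (x 35) (x 33) ∧
  x 40 = op (x 36) (x 34) ∧
  x 38 = op (x 36) (x 33) ∧
  x 34 = op (x 41) (x 38) ∧
  x 33 = op (x 42) (x 38) ∧
  x 40 = op (x 41) (x 37) ∧
  x 39 = op (x 42) (x 37) ∧
  x 24 = op (x 43) (x 39) ∧
  x 38 = op (x 43) (x 40) ∧
  x 26 = op (x 44) (x 39) ∧
  x 37 = op (x 44) (x 40)

/-- The symplectic form on `V`. -/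
def form (x y : V) : ZMod 5 := x 0 * y 1 - x 1 * y 0

lemma op_eq (x y : V) : op x y = x + form x y • y := rfl

lemma form_self (x : V) : form x x = 0 := by simp only [form]; ring

lemma form_swap (x y : V) : form x y = -form y x := by simp only [form]; ring

lemma form_add_left (x y z : V) : form (x + y) z = form x z + form y z := by
  simp only [form, Pi.add_apply]; ring

lemma form_add_right (x y z : V) : form x (y + z) = form x y + form x z := by
  simp only [form, Pi.add_apply]; ring

lemma form_sub_left (x y z : V) : form (x - y) z = form x z - form y z := by
  simp only [form, Pi.sub_apply]; ring

lemma form_sub_right (x y z : V) : form x (y - z) = form x y - form x z := by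
  simp only [form, Pi.sub_apply]; ring

lemma form_smul_left (k : ZMod 5) (x y : V) : form (k • x) y = k * form x y := by
  simp only [form, Pi.smul_apply, smul_eq_mul]; ring

lemma form_smul_right (k : ZMod 5) (x y : V) : form x (k • y) = k * form x y := by
  simp only [form, Pi.smul_apply, smul_eq_mul]; ring

lemma form_plucker (x y z t : V) :
    form x y * form z t - form x z * form y t + form x t * form y z = 0 := by
  simp only [form]; ring

/-- Right translations are invertible: `⟨x, z⟩ = ⟨x ▷ z, z⟩`, so the inverse subtracts. -/
lemma eq_sub_of_eq_op {x y z : V} (h : y = op x z) : x = y - form y z • z := by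
  have hf : form y z = form x z := by
    rw [h, op_eq, form_add_left, form_smul_left, form_self]; ring
  rw [hf, h, op_eq]; abel

/-- Right translations are symplectic. -/
lemma form_op_op (x y z : V) : form (op x z) (op y z) = form x y := by
  simp only [op_eq, form_add_left, form_add_right, form_smul_left, form_smul_right, form_self]
  rw [form_swap z y]; ring

/-- The finite check behind `block_form_sq_ne_one`. There `m = ⟨x₂₂, x₂₁⟩ = ⟨x₁₉, x₂₀⟩`,
`A = ⟨x₁₉, x₂₁⟩`, `B = ⟨x₁₉, x₂₂⟩`, `C = ⟨x₂₀, x₂₁⟩`, `D = ⟨x₂₀, x₂₂⟩`, `u = ⟨x₁₃, x₂₁⟩`,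
`v = ⟨x₁₄, x₂₁⟩`; the names `ea`, `eb`, `da`, `fb`, `fa` stand for `⟨x₁₉, x₁₃⟩`, `⟨x₁₉, x₁₄⟩`,
`⟨x₂₂, x₁₃⟩`, `⟨x₂₀, x₁₄⟩`, `⟨x₂₀, x₁₃⟩`, and the conclusion says `⟨x₁₃, x₂₆⟩² ≠ 1`. -/
lemma scalar_check : ∀ m A B C D : ZMod 5, B * C - A * D = m * m →
    ∀ u, u = A - B * m → ∀ v, v = C - D * m →
    ∀ ea, ea = u * A - B * B → ∀ eb, eb = m - D * B + v * A →
    ∀ da, da = u * m - B →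
    eb * eb + B - da * ea = 0 →
    A - eb * v - m + da * u = 0 →
    ∀ fb, fb = v * C - D * D → ∀ fa, fa = u * C - m - B * D →
    fb * fb + C + u * fa = 0 →
    (u - C * fa + (A + C * m) * ea) ^ 2 ≠ 1 := by
  intro m A B C D h u hu v hv ea hea eb heb da hda h1 h2 fb hfb fa hfa h3
  subst hfb hfa hda heb hea hu hv
  revert m A B C D
  decide

/-- The subtangle with arcs `x₁₃ = a`, `x₁₄ = b`, `x₂₁ = c`, `x₂₂ = d`, `x₁₉ = e`, `x₂₀ = f` and
`x₂₆ = q`; the arcs `r, s, t, y, z` are `x₁₅, x₁₆, x₁₇, x₁₈, x₂₃`. -/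
lemma block_form_sq_ne_one {a b c d e f q r s t y z : V}
    (her : e = op r b) (hdr : d = op r a) (hfs : f = op s b) (hcs : c = op s a)
    (hbt : b = op t c) (hay : a = op y c) (hft : f = op t d) (hey : e = op y d)
    (hcz : c = op z f) (hqz : q = op z e) : form a q ^ 2 ≠ 1 := by
  have hm : form e f = form d c := by rw [her, hfs, hdr, hcs, form_op_op, form_op_op]
  -- The two expressions for `r`, and for `s`.
  have E1 : e - form e b • b = d - form d a • a := by
    rw [← eq_sub_of_eq_op her, ← eq_sub_of_eq_op hdr]
  have E2 : f - form f b • b = c - form c a • a := by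
    rw [← eq_sub_of_eq_op hfs, ← eq_sub_of_eq_op hcs]
  have P1 := congrArg (fun v => form v e) E1
  have P2 := congrArg (fun v => form v c) E1
  have P3 := congrArg (fun v => form v f) E2
  simp only [form_sub_left, form_smul_left, form_self] at P1 P2 P3
  -- `a`, `b` and `q` as combinations of `c, d, e, f`.
  have ha : a = e - form e d • d + form (e - form e d • d) c • c := by
    rw [← eq_sub_of_eq_op hey, ← op_eq, hay]
  have hb : b = f - form f d • d + form (f - form f d • d) c • c := by
    rw [← eq_sub_of_eq_op hft, ← op_eq, hbt]
  have hq : q = c - form c f • f + form (c - form c f • f) e • e := by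
    rw [← eq_sub_of_eq_op hcz, ← op_eq, hqz]
  have hpl := form_plucker e f c d
  have cd := form_swap c d
  have ce := form_swap c e
  have cf := form_swap c f
  have de := form_swap d e
  have df := form_swap d f
  have fe := form_swap f e
  have ac : form a c = form e c - form e d * form d c := by
    rw [ha]; simp only [form_add_left, form_sub_left, form_smul_left, form_self]; ring
  have bc : form b c = form f c - form f d * form d c := by
    rw [hb]; simp only [form_add_left, form_sub_left, form_smul_left, form_self]; ring
  have ca := form_swap c a
  have ea : form e a = form a c * form e c - form e d * form e d := by
    rw [ac, ha]
    simp only [form_add_right, form_sub_left, form_sub_right, form_smul_left,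
      form_smul_right, form_self]
    ring
  have ae := form_swap a e
  have eb : form e b = form d c - form f d * form e d + form b c * form e c := by
    rw [bc, hb]
    simp only [form_add_right, form_sub_left, form_sub_right, form_smul_left,
      form_smul_right, hm]
  have be := form_swap b e
  have da : form d a = form a c * form d c - form e d := by
    rw [ac, ha]
    simp only [form_add_right, form_sub_left, form_sub_right, form_smul_left,
      form_smul_right, form_self, de]
    ring
  have fb : form f b = form b c * form f c - form f d * form f d := by
    rw [bc, hb]
    simp only [form_add_right, form_sub_left, form_sub_right, form_smul_left,
      form_smul_right, form_self]
    ring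
  have bf := form_swap b f
  have fa : form f a = form a c * form f c - form d c - form e d * form f d := by
    rw [ac, ha]
    simp only [form_add_right, form_sub_left, form_sub_right, form_smul_left,
      form_smul_right, fe, hm]
    ring
  have af := form_swap a f
  have aq : form a q =
      form a c - form f c * form f a + (form e c + form f c * form d c) * form e a := by
    rw [hq]
    simp only [form_add_right, form_sub_left, form_sub_right, form_smul_left,
      form_smul_right, ce, cf, fe, ae, af, hm]
    ring
  rw [aq]
  refine scalar_check (form d c) (form e c) (form e d) (form f c) (form f d) ?_ _ ac _ bc _ ea
    _ eb _ da ?_ ?_ _ fb _ fa ?_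
  · rw [hm, cd] at hpl
    linear_combination hpl
  · rw [be, de, ae] at P1
    linear_combination P1
  · linear_combination P2
  · rw [bf, cf, ca, af] at P3
    linear_combination P3

/-- The crossings among `x₁, x₂, x₃, x₄, x₁₃, x₂₆`, here called `a, b, c, d, g, q`. -/
lemma form_sq_eq_one {a b c d g q : V} (hbq : b = op a q) (hab : a = op b c) (hcd : c = op d a)
    (hg : g = op b d) (hp : form a c ≠ 0) : form g q ^ 2 = 1 := by
  have hb : b = a - form a c • c := eq_sub_of_eq_op hab
  have hd : d = c - form c a • a := eq_sub_of_eq_op hcd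
  have hs : form a q • q = -(form a c • c) := by
    rw [op_eq] at hbq
    have := hbq.symm.trans hb
    rw [sub_eq_add_neg] at this
    exact add_left_cancel this
  have ca := form_swap c a
  have h1 : form a q * form a q = -(form a c * form a c) := by
    have := congrArg (form a) hs
    rw [← neg_smul, form_smul_right, form_smul_right] at this
    linear_combination this
  have hgc : form g c = form a c * (1 + form a c ^ 2 + form a c ^ 4) := by
    rw [hg, op_eq, hd, hb]
    simp only [form_add_left, form_sub_left, form_sub_right, form_smul_left, form_smul_right,
      form_self, ca]
    ring
  have h2 : form a q * form g q = -(form a c * form g c) := by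
    have := congrArg (form g) hs
    rw [← neg_smul, form_smul_right, form_smul_right] at this
    linear_combination this
  rw [hgc] at h2
  generalize form a q = s at *
  generalize form g q = k at *
  generalize form a c = p at *
  clear * - h1 h2 hp
  revert s k p
  decide

theorem l1_forced_equalities (x : Fin 45 → V) (hx : L1Sys x) :
    x 0 = x 1 ∧ x 2 = x 3 ∧ x 3 = x 4 ∧ x 25 = x 26 := by
  obtain ⟨h1, h2, h3, h4, h5, -, -, -, -, -, -, -, -, h14, -, h16, h17, h18, h19, h20, h21, h22,
    h23, h24, -, h26, -⟩ := hx
  have hp : form (x 0) (x 2) = 0 := by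
    by_contra hp
    exact block_form_sq_ne_one h16 h17 h18 h19 h20 h21 h22 h23 h24 h26
      (form_sq_eq_one h1 h3 h4 h14 hp)
  have e1 : x 1 = x 0 := by
    have := eq_sub_of_eq_op h3
    rwa [hp, zero_smul, sub_zero] at this
  have e3 : x 3 = x 2 := by
    have := eq_sub_of_eq_op h4
    rwa [form_swap, hp, neg_zero, zero_smul, sub_zero] at this
  have e4 : x 4 = x 3 := by
    have := eq_sub_of_eq_op h5
    rwa [e3, form_self, zero_smul, sub_zero, ← e3] at this
  have e26 : x 26 = x 25 := by
    have hs : form (x 0) (x 25) • x 25 = 0 := by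
      rw [op_eq, e1] at h1
      exact left_eq_add.mp h1
    have : Fact (Nat.Prime 5) := ⟨by norm_num⟩
    have h0 : form (x 25) (x 0) = 0 := by
      have := congrArg (form (x 0)) hs
      rw [form_smul_right, ← zero_smul (ZMod 5) (x 0), form_smul_right, zero_mul,
        mul_self_eq_zero] at this
      rw [form_swap, this, neg_zero]
    have := eq_sub_of_eq_op h2
    rwa [h0, zero_smul, sub_zero] at this
  exact ⟨e1.symm, e3.symm, e4.symm, e26.symm⟩
end

section
/- Let V = (ZMod 5)² be the symplectic quandle. For every solution f1 of the L1 system over V there exists a solution f2 of the L2 system over V whose image (the set of values taken by its 85 variables) equals the image of f1 (the set of values taken by its 45 variables). -/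
def L2Sys (x : Fin 85 → V) : Prop :=
  x 1 = op (x 0) (x 25) ∧
  x 25 = op (x 26) (x 0) ∧
  x 0 = op (x 1) (x 2) ∧
  x 2 = op (x 3) (x 0) ∧
  x 3 = op (x 4) (x 2) ∧
  x 4 = op (x 5) (x 6) ∧
  x 7 = op (x 6) (x 5) ∧
  x 28 = op (x 27) (x 5) ∧
  x 46 = op (x 5) (x 27) ∧
  x 8 = op (x 7) (x 6) ∧
  x 6 = op (x 9) (x 8) ∧
  x 10 = op (x 8) (x 9) ∧
  x 9 = op (x 10) (x 11) ∧
  x 12 = op (x 1) (x 3) ∧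
  x 11 = op (x 13) (x 12) ∧
  x 18 = op (x 14) (x 13) ∧
  x 21 = op (x 14) (x 12) ∧
  x 19 = op (x 15) (x 13) ∧
  x 20 = op (x 15) (x 12) ∧
  x 13 = op (x 16) (x 20) ∧
  x 12 = op (x 17) (x 20) ∧
  x 19 = op (x 16) (x 21) ∧
  x 18 = op (x 17) (x 21) ∧
  x 20 = op (x 22) (x 19) ∧
  x 21 = op (x 23) (x 19) ∧
  x 25 = op (x 22) (x 18) ∧
  x 24 = op (x 23) (x 18) ∧
  x 29 = op (x 27) (x 28) ∧
  x 28 = op (x 30) (x 29) ∧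
  x 31 = op (x 29) (x 30) ∧
  x 30 = op (x 32) (x 31) ∧
  x 33 = op (x 31) (x 32) ∧
  x 32 = op (x 34) (x 33) ∧
  x 39 = op (x 35) (x 34) ∧
  x 37 = op (x 35) (x 33) ∧
  x 40 = op (x 36) (x 34) ∧
  x 38 = op (x 36) (x 33) ∧
  x 34 = op (x 41) (x 38) ∧
  x 33 = op (x 42) (x 38) ∧
  x 40 = op (x 41) (x 37) ∧
  x 39 = op (x 42) (x 37) ∧
  x 24 = op (x 43) (x 39) ∧
  x 38 = op (x 43) (x 40) ∧
  x 45 = op (x 44) (x 39) ∧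
  x 37 = op (x 44) (x 40) ∧
  x 46 = op (x 66) (x 47) ∧
  x 48 = op (x 47) (x 66) ∧
  x 68 = op (x 67) (x 66) ∧
  x 2 = op (x 66) (x 67) ∧
  x 49 = op (x 48) (x 47) ∧
  x 47 = op (x 50) (x 49) ∧
  x 51 = op (x 49) (x 50) ∧
  x 50 = op (x 52) (x 51) ∧
  x 53 = op (x 51) (x 52) ∧
  x 52 = op (x 54) (x 53) ∧
  x 57 = op (x 55) (x 54) ∧
  x 60 = op (x 55) (x 53) ∧
  x 58 = op (x 56) (x 54) ∧
  x 59 = op (x 56) (x 53) ∧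
  x 54 = op (x 61) (x 59) ∧
  x 53 = op (x 62) (x 59) ∧
  x 58 = op (x 61) (x 60) ∧
  x 57 = op (x 62) (x 60) ∧
  x 45 = op (x 63) (x 57) ∧
  x 59 = op (x 63) (x 58) ∧
  x 65 = op (x 64) (x 57) ∧
  x 60 = op (x 64) (x 58) ∧
  x 69 = op (x 67) (x 68) ∧
  x 68 = op (x 70) (x 69) ∧
  x 71 = op (x 69) (x 70) ∧
  x 70 = op (x 72) (x 71) ∧
  x 73 = op (x 71) (x 72) ∧
  x 72 = op (x 74) (x 73) ∧
  x 77 = op (x 75) (x 74) ∧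
  x 80 = op (x 75) (x 73) ∧
  x 78 = op (x 76) (x 74) ∧
  x 79 = op (x 76) (x 73) ∧
  x 74 = op (x 81) (x 79) ∧
  x 73 = op (x 82) (x 79) ∧
  x 78 = op (x 81) (x 80) ∧
  x 77 = op (x 82) (x 80) ∧
  x 65 = op (x 83) (x 77) ∧
  x 79 = op (x 83) (x 78) ∧
  x 26 = op (x 84) (x 77) ∧
  x 80 = op (x 84) (x 78)

/-- The inverse quandle operation: `opInv · y` undoes `op · y`. -/
def opInv (x y : V) : V := x - (x 0 * y 1 - x 1 * y 0) • y

lemma op_zero_coord (x y : V) : op x y 0 = x 0 + (x 0 * y 1 - x 1 * y 0) * y 0 := by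
  simp [op]

lemma op_one_coord (x y : V) : op x y 1 = x 1 + (x 0 * y 1 - x 1 * y 0) * y 1 := by
  simp [op]

lemma opInv_zero_coord (x y : V) : opInv x y 0 = x 0 - (x 0 * y 1 - x 1 * y 0) * y 0 := by
  simp [opInv]

lemma opInv_one_coord (x y : V) : opInv x y 1 = x 1 - (x 0 * y 1 - x 1 * y 0) * y 1 := by
  simp [opInv]

lemma V_ext {x y : V} (h0 : x 0 = y 0) (h1 : x 1 = y 1) : x = y := by
  funext i
  fin_cases i
  · exact h0
  · exact h1

lemma op_opInv (x y : V) : op (opInv x y) y = x := by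
  apply V_ext <;> simp only [op_zero_coord, op_one_coord, opInv_zero_coord, opInv_one_coord] <;> ring

lemma opInv_op (x y : V) : opInv (op x y) y = x := by
  apply V_ext <;> simp only [op_zero_coord, op_one_coord, opInv_zero_coord, opInv_one_coord] <;> ring

lemma eq_opInv {x y z : V} (h : z = op x y) : x = opInv z y := by
  rw [h, opInv_op]

lemma op_self (x : V) : op x x = x := by
  apply V_ext <;> simp only [op_zero_coord, op_one_coord] <;> ring

lemma opInv_self (x : V) : opInv x x = x := by
  apply V_ext <;> simp only [opInv_zero_coord, opInv_one_coord] <;> ring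

lemma op_of_form_eq_zero {x y : V} (h : form x y = 0) : op x y = x := by
  simp only [form] at h
  simp [op, h]

lemma form_opInv_opInv (x y z : V) : form (opInv x z) (opInv y z) = form x y := by
  simp only [form, opInv_zero_coord, opInv_one_coord]
  ring

lemma opInv_op_distrib (x y z : V) : opInv (op x y) z = op (opInv x z) (opInv y z) := by
  apply V_ext <;> simp only [op_zero_coord, op_one_coord, opInv_zero_coord, opInv_one_coord] <;> ring

lemma opInv_opInv_distrib (x y z : V) :
    opInv (opInv x y) z = opInv (opInv x z) (opInv y z) := by
  apply V_ext <;> simp only [opInv_zero_coord, opInv_one_coord] <;> ring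

/-! ### The twelve-crossing block -/

/-- Both systems contain several copies of one pattern of twelve crossings, with two pairs of ends
`(a, b)` and `(p, q)`. After eliminating the variables determined by the others, two interior
colours `s`, `r` remain, subject to two equations, and they determine `p` and `q`. -/
def Block (a b p q : V) : Prop :=
  ∃ s r : V, op (opInv a (op s b)) (op r b) = op s a ∧
    op (opInv b (op s b)) (op r b) = op r a ∧
    op (opInv (op s b) (op s a)) (op r a) = p ∧
    op (opInv (op r b) (op s a)) (op r a) = q

lemma Block.of_crossings {a b p q r s c d e f g h k l : V}
    (h1 : e = op r a) (h2 : c = op r b) (h3 : f = op s a) (h4 : d = op s b)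
    (h5 : a = op g d) (h6 : b = op h d) (h7 : f = op g c) (h8 : e = op h c)
    (h9 : p = op k e) (h10 : d = op k f) (h11 : q = op l e) (h12 : c = op l f) :
    Block a b p q := by
  have hg := eq_opInv h5
  have hh := eq_opInv h6
  have hk := eq_opInv h10
  have hl := eq_opInv h12
  refine ⟨s, r, ?_, ?_, ?_, ?_⟩
  · rw [← h4, ← h2, ← h3, ← hg, h7]
  · rw [← h4, ← h2, ← h1, ← hh, h8]
  · rw [← h4, ← h3, ← h1, ← hk, h9]
  · rw [← h2, ← h3, ← h1, ← hl, h11]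

/-- The interior pair and both end pairs of a block are images of each other under products of
transvections. -/
lemma Block.form_interior {a b s r : V} (h1 : op (opInv a (op s b)) (op r b) = op s a)
    (h2 : op (opInv b (op s b)) (op r b) = op r a) : form s r = form a b := by
  rw [← form_op_op s r a, ← h1, ← h2, form_op_op, form_opInv_opInv]

lemma Block.form_eq {a b p q : V} (h : Block a b p q) : form p q = form a b := by
  obtain ⟨s, r, h1, h2, rfl, rfl⟩ := h
  rw [form_op_op, form_opInv_opInv, form_op_op, Block.form_interior h1 h2]

lemma Block.eq_of_diag {a p q : V} (h : Block a a p q) : p = a ∧ q = a := by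
  obtain ⟨s, r, h1, h2, rfl, rfl⟩ := h
  have hsr : op s a = op r a := h1.symm.trans h2
  rw [hsr, op_opInv] at h2
  have hr : r = a := by rw [eq_opInv h2, opInv_self]
  have hs : s = a := by rw [eq_opInv (h2.trans hsr.symm), opInv_self]
  subst hs
  subst hr
  simp [op_self, opInv_self]

/-- If the ends `a`, `b` of a block are proportional, then so are `b` and `q`. Conjugating away
`T_a` and `T_b`, the second block equation says that `b` moved by `T_s⁻¹ T_r` equals `r` moved by
`T_a T_b⁻¹`; each of these two products is a shear because `⟨s,r⟩ = ⟨a,b⟩ = 0`, and pairing with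
`b`, `s` and `r` gives the claim. -/
lemma Block.form_right_eq_zero {a b p q : V} (h : Block a b p q) (hab : form a b = 0) :
    form b q = 0 := by
  obtain ⟨s, r, h1, h2, -, rfl⟩ := h
  have hsr : form s r = 0 := (Block.form_interior h1 h2).trans hab
  have hb : opInv b a = b := by
    simp only [form] at hab
    apply V_ext
    · rw [opInv_zero_coord]; linear_combination a 0 * hab
    · rw [opInv_one_coord]; linear_combination a 1 * hab
  have h3 : op (opInv b s) r = opInv (op r a) b := by
    rw [← h2, opInv_op_distrib, opInv_opInv_distrib, opInv_op, opInv_op, opInv_self]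
  rw [← form_opInv_opInv _ _ a, hb, opInv_op_distrib, opInv_opInv_distrib, opInv_op, opInv_op]
  -- the two sides of `h3` as shears, using `⟨s,r⟩ = 0` and `⟨a,b⟩ = 0`
  have hw (i : Fin 2) : b i - form b s * s i + form b r * r i =
      r i + form r a * a i - form r b * b i := by
    have h4 := congrFun h3 i
    simp only [op, opInv, Pi.add_apply, Pi.sub_apply, Pi.smul_apply, smul_eq_mul] at h4
    simp only [form] at hab hsr ⊢
    linear_combination h4 + (b 0 * s 1 - b 1 * s 0) * r i * hsr -
      (r 0 * a 1 - r 1 * a 0) * b i * hab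
  have hN (i : Fin 2) : opInv (op r b) a i =
      2 * r i - b i + form b s * s i - form b r * r i := by
    have h4 := hw i
    simp only [op, opInv, Pi.add_apply, Pi.sub_apply, Pi.smul_apply, smul_eq_mul]
    simp only [form] at hab h4 ⊢
    linear_combination h4 + (r 0 * b 1 - r 1 * b 0) * a i * hab
  have hw0 := hw 0
  have hw1 := hw 1
  have hN0 := hN 0
  have hN1 := hN 1
  generalize opInv (op r b) a = N at hN0 hN1 ⊢
  have e1 : form N s = -form b s := by
    simp only [form] at hsr hN0 hN1 ⊢
    linear_combination s 1 * hN0 - s 0 * hN1 - (2 - (b 0 * r 1 - b 1 * r 0)) * hsr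
  have e2 : form N r = -form b r := by
    simp only [form] at hsr hN0 hN1 ⊢
    linear_combination r 1 * hN0 - r 0 * hN1 + (b 0 * s 1 - b 1 * s 0) * hsr
  have e3 : form b N = 2 * form b r + form b s ^ 2 - form b r ^ 2 := by
    simp only [form] at hN0 hN1 ⊢
    linear_combination b 0 * hN1 - b 1 * hN0
  have e4 : form b r = form b r ^ 2 - form b s ^ 2 := by
    simp only [form] at hab hw0 hw1 ⊢
    linear_combination b 1 * hw0 - b 0 * hw1 + (r 0 * a 1 - r 1 * a 0) * hab
  have e5 : form b (op (opInv N s) r) =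
      form b N - form N s * form b s + (form N r - form N s * form s r) * form b r := by
    simp only [form, op_zero_coord, op_one_coord, opInv_zero_coord, opInv_one_coord]
    ring
  rw [e5, e1, e2, e3, hsr]
  linear_combination 2 * e4

/-! ### The twisted band -/

/-- Two consecutive crossings of the twisted band, in which the colours of the two strands advance
from `(y₀, y₁)` to `(y₂, y₃)`. -/
def twist (y : V × V) : V × V := (op y.1 y.2, opInv y.2 (op y.1 y.2))

/-- The band starting from `x₂₈ = (1, 0)`, `x₆ = (0, d)` ends in `(x₃₄, x₃₅)`, which depends only on
`d ^ 2`. -/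
lemma band_ends : ∀ d : ZMod 5, d ≠ 0 →
    twist (twist (twist (![1, 0], op ![1, 0] ![0, d]))) =
      if d ^ 2 = 1 then (![3, 3], ![1, 3]) else (![2, 3], ![0, 2]) := by
  decide +kernel

/-- The ends `(x₂₅, x₂₇)` of the block behind the band, when `d ^ 2 = 1`. The interior pair `(s, r)`
has the same form as `(a, b)`, which leaves 120 pairs to test. -/
lemma block_sq_one {p q : V} (h : Block ![1, 3] ![3, 3] p q) :
    p = ![1, 1] ∧ q = ![1, 0] ∨ p = ![3, 2] ∧ q = ![2, 1] := by
  have key : ∀ s r : V, form s r = form ![1, 3] ![3, 3] →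
      op (opInv ![1, 3] (op s ![3, 3])) (op r ![3, 3]) = op s ![1, 3] →
      op (opInv ![3, 3] (op s ![3, 3])) (op r ![3, 3]) = op r ![1, 3] →
      op (opInv (op s ![3, 3]) (op s ![1, 3])) (op r ![1, 3]) = ![1, 1] ∧
        op (opInv (op r ![3, 3]) (op s ![1, 3])) (op r ![1, 3]) = ![1, 0] ∨
      op (opInv (op s ![3, 3]) (op s ![1, 3])) (op r ![1, 3]) = ![3, 2] ∧
        op (opInv (op r ![3, 3]) (op s ![1, 3])) (op r ![1, 3]) = ![2, 1] := by
    decide +kernel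
  obtain ⟨s, r, h1, h2, rfl, rfl⟩ := h
  exact key s r (Block.form_interior h1 h2) h1 h2

/-- The ends `(x₂₅, x₂₇)` of the block behind the band, when `d ^ 2 = -1`. -/
lemma block_sq_neg_one {p q : V} (h : Block ![0, 2] ![2, 3] p q) :
    p = ![1, 3] ∧ q = ![0, 1] ∨ p = ![1, 4] ∧ q = ![1, 0] := by
  have key : ∀ s r : V, form s r = form ![0, 2] ![2, 3] →
      op (opInv ![0, 2] (op s ![2, 3])) (op r ![2, 3]) = op s ![0, 2] →
      op (opInv ![2, 3] (op s ![2, 3])) (op r ![2, 3]) = op r ![0, 2] →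
      op (opInv (op s ![2, 3]) (op s ![0, 2])) (op r ![0, 2]) = ![1, 3] ∧
        op (opInv (op r ![2, 3]) (op s ![0, 2])) (op r ![0, 2]) = ![0, 1] ∨
      op (opInv (op s ![2, 3]) (op s ![0, 2])) (op r ![0, 2]) = ![1, 4] ∧
        op (opInv (op r ![2, 3]) (op s ![0, 2])) (op r ![0, 2]) = ![1, 0] := by
    decide +kernel
  obtain ⟨s, r, h1, h2, rfl, rfl⟩ := h
  exact key s r (Block.form_interior h1 h2) h1 h2

/-! ### Excluding crossing colours that do not commute -/

/-- For every `x₁₂` compatible with `x₉`, `x₁₀`, there is no block with ends `(x₁₄, x₁₃)` and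
`(x₂₆, x₂₅)`, for one of two reasons: such a block would not preserve the form, or the form vanishes
on its end pairs but `x₁₃`, `x₂₅` are not proportional. Here `x₁₁` and `x₁₄` are eliminated. -/
def ExcludedTail (x9 x10 x13 x25 x26 : V) : Prop :=
  ∀ x12 : V, x10 = op (op x9 x10) x12 → form x26 x25 = form (opInv x12 x13) x13 →
    form x26 x25 = 0 ∧ form x13 x25 ≠ 0

/-- As `ExcludedTail`, for all colours `x₇` compatible with `x₅` and `x₆`, with `x₈`, `x₉`,
`x₁₀` eliminated. -/
def ExcludedMiddle (x5 x6 x13 x25 x26 : V) : Prop :=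
  ∀ x7 : V, x5 = op x6 x7 →
    ExcludedTail (op (op x7 x6) x7) (opInv x7 (op (op x7 x6) x7)) x13 x25 x26

/-- As `ExcludedMiddle`, for all colours `x₁` compatible with `x₃` and `x₂₇`, with `x₂`, `x₄`, `x₅`,
`x₁₃`, `x₂₆` eliminated. -/
def Excluded (x3 x6 x25 x27 : V) : Prop :=
  ∀ x1 : V, x1 = op (op x1 (op x27 x1)) x3 →
    ExcludedMiddle (opInv (opInv x3 x1) x3) x6 (op (op x1 (op x27 x1)) (opInv x3 x1)) x25
      (op x27 x1)

instance (x9 x10 x13 x25 x26 : V) : Decidable (ExcludedTail x9 x10 x13 x25 x26) := by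
  unfold ExcludedTail
  infer_instance

instance (x5 x6 x13 x25 x26 : V) : Decidable (ExcludedMiddle x5 x6 x13 x25 x26) := by
  unfold ExcludedMiddle
  infer_instance

instance (x3 x6 x25 x27 : V) : Decidable (Excluded x3 x6 x25 x27) := by
  unfold Excluded
  infer_instance

lemma excluded_sq_one : ∀ d : ZMod 5, d ≠ 0 → d ^ 2 = 1 →
    Excluded (op ![0, d] ![1, 0]) ![0, d] ![1, 1] ![1, 0] ∧
      Excluded (op ![0, d] ![1, 0]) ![0, d] ![3, 2] ![2, 1] := by
  decide +kernel

lemma excluded_sq_neg_one : ∀ d : ZMod 5, d ≠ 0 → d ^ 2 ≠ 1 →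
    Excluded (op ![0, d] ![1, 0]) ![0, d] ![1, 3] ![0, 1] ∧
      Excluded (op ![0, d] ![1, 0]) ![0, d] ![1, 4] ![1, 0] := by
  decide +kernel

/-- No solution has `x₂₈ = (1, 0)` and `x₆ = (0, d)` with `d ≠ 0`. -/
lemma no_normalised_solution (x : Fin 45 → V) (h : L1Sys x) (d : ZMod 5) (hd : d ≠ 0)
    (hu : x 27 = ![1, 0]) (hw : x 5 = ![0, d]) : False := by
  obtain ⟨h1, h2, h3, h4, h5, h6, h7, h8, h9, h10, h11, h12, h13, h14, h15, h16, h17, h18, h19,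
    h20, h21, h22, h23, h24, h25, h26, h27, h28, h29, h30, h31, h32, h33, h34, h35, h36, h37,
    h38, h39, h40, h41, h42, h43, h44, h45⟩ := h
  have blockA : Block (x 34) (x 33) (x 24) (x 26) :=
    Block.of_crossings h34 h35 h36 h37 h38 h39 h40 h41 h42 h43 h44 h45
  have blockM : Block (x 13) (x 12) (x 25) (x 24) :=
    Block.of_crossings h16 h17 h18 h19 h20 h21 h22 h23 h26 h24 h27 h25
  have band : twist (twist (twist (x 27, x 28))) = (x 33, x 34) := by
    simp only [twist, ← h28, ← eq_opInv h29, ← h30, ← eq_opInv h31, ← h32, ← eq_opInv h33]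
  have excluded : Excluded (x 2) (x 5) (x 24) (x 26) := by
    rw [h8, hu, hw, band_ends d hd] at band
    rw [h9, hu, hw]
    split_ifs at band with hsq
    · obtain ⟨hb, ha⟩ := Prod.mk.inj band
      rw [← ha, ← hb] at blockA
      obtain ⟨e1, e2⟩ | ⟨e1, e2⟩ := block_sq_one blockA <;> rw [e1, e2]
      · exact (excluded_sq_one d hd hsq).1
      · exact (excluded_sq_one d hd hsq).2
    · obtain ⟨hb, ha⟩ := Prod.mk.inj band
      rw [← ha, ← hb] at blockA
      obtain ⟨e1, e2⟩ | ⟨e1, e2⟩ := block_sq_neg_one blockA <;> rw [e1, e2]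
      · exact (excluded_sq_neg_one d hd hsq).1
      · exact (excluded_sq_neg_one d hd hsq).2
  have middle := excluded (x 0) (by rw [← h2, ← h1, ← h3])
  rw [← h2, ← h1, ← eq_opInv h4, ← eq_opInv h5, ← h14] at middle
  have tail := middle (x 6) h6
  rw [← h7, ← h10, ← eq_opInv h11] at tail
  obtain ⟨t1, t2⟩ := tail (x 11) (by rw [← h12, ← h13])
    (by rw [← eq_opInv h15, blockM.form_eq])
  exact t2 (blockM.form_right_eq_zero (blockM.form_eq ▸ t1))

/-- In every solution the clasp colours `x₂₈` and `x₆` are proportional: otherwise a symplectic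
change of basis, which is an automorphism of the quandle, sends them to `(1, 0)` and `(0, d)`
with `d = ⟨x₂₈, x₆⟩`. -/
lemma form_clasp_eq_zero (x : Fin 45 → V) (h : L1Sys x) : form (x 27) (x 5) = 0 := by
  by_contra hd
  obtain ⟨e, he⟩ : ∃ e, e * form (x 27) (x 5) = 1 := by
    generalize form (x 27) (x 5) = d at hd
    revert d
    decide
  let g : V → V := fun v => ![e * form v (x 5), form (x 27) v]
  have g0 (v : V) : g v 0 = e * form v (x 5) := rfl
  have g1 (v : V) : g v 1 = form (x 27) v := rfl
  have hg (u v : V) : g (op u v) = op (g u) (g v) := by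
    have hdet : g u 0 * g v 1 - g u 1 * g v 0 = u 0 * v 1 - u 1 * v 0 := by
      simp only [g0, g1, form] at he ⊢
      linear_combination (u 0 * v 1 - u 1 * v 0) * he
    apply V_ext
    · rw [op_zero_coord, hdet]
      simp only [g0, form, op_zero_coord, op_one_coord]
      ring
    · rw [op_one_coord, hdet]
      simp only [g1, form, op_zero_coord, op_one_coord]
      ring
  refine no_normalised_solution (fun i => g (x i)) ?_ (form (x 27) (x 5)) hd ?_ ?_
  · simp only [L1Sys, ← hg]
    simp only [L1Sys] at h
    obtain ⟨h1, h2, h3, h4, h5, h6, h7, h8, h9, h10, h11, h12, h13, h14, h15, h16, h17, h18, h19,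
      h20, h21, h22, h23, h24, h25, h26, h27, h28, h29, h30, h31, h32, h33, h34, h35, h36, h37,
      h38, h39, h40, h41, h42, h43, h44, h45⟩ := h
    refine ⟨?_, ?_, ?_, ?_, ?_, ?_, ?_, ?_, ?_, ?_, ?_, ?_, ?_, ?_, ?_, ?_, ?_, ?_, ?_, ?_, ?_, ?_,
      ?_, ?_, ?_, ?_, ?_, ?_, ?_, ?_, ?_, ?_, ?_, ?_, ?_, ?_, ?_, ?_, ?_, ?_, ?_, ?_, ?_, ?_, ?_⟩ <;>
      exact congrArg g ‹_›
  · refine V_ext he ?_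
    rw [g1, form]
    exact sub_eq_zero.2 (mul_comm _ _)
  · refine V_ext ?_ rfl
    rw [g0, form]
    exact mul_eq_zero_of_right _ (sub_eq_zero.2 (mul_comm _ _))

/-- The colouring of the second link: the variables shared with the first link keep their colours,
the clasp strand of the two additional bands is coloured by `x₃`, and everything else by `x₂₈`. -/
def extend (x : Fin 45 → V) (i : Fin 85) : V :=
  if h : (i : ℕ) < 45 then x ⟨i, h⟩ else if (i : ℕ) = 46 ∨ (i : ℕ) = 66 then x 2 else x 27

theorem l1_solution_extends_to_l2 (x1 : Fin 45 → V) (h1 : L1Sys x1) :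
    ∃ x2 : Fin 85 → V, L2Sys x2 ∧
      Finset.image x2 Finset.univ = Finset.image x1 Finset.univ := by
  have clasp := form_clasp_eq_zero x1 h1
  have clasp' : form (x1 5) (x1 27) = 0 := by
    simp only [form] at clasp ⊢
    linear_combination -clasp
  refine ⟨extend x1, ?_, ?_⟩
  · obtain ⟨h1, h2, h3, h4, h5, h6, h7, h8, h9, h10, h11, h12, h13, h14, h15, h16, h17, h18, h19,
      h20, h21, h22, h23, h24, h25, h26, h27, h28, h29, h30, h31, h32, h33, h34, h35, h36, h37,
      h38, h39, h40, h41, h42, h43, h44, h45⟩ := h1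
    have e28 : x1 28 = x1 27 := by rw [h8, op_of_form_eq_zero clasp]
    have e2 : x1 2 = x1 5 := by rw [h9, op_of_form_eq_zero clasp']
    have e29 : x1 29 = x1 27 := by rw [h28, e28, op_self]
    have e30 : x1 30 = x1 27 := by rw [eq_opInv h29, e28, e29, opInv_self]
    have e31 : x1 31 = x1 27 := by rw [h30, e29, e30, op_self]
    have e32 : x1 32 = x1 27 := by rw [eq_opInv h31, e30, e31, opInv_self]
    have e33 : x1 33 = x1 27 := by rw [h32, e31, e32, op_self]
    have e34 : x1 34 = x1 27 := by rw [eq_opInv h33, e32, e33, opInv_self]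
    have blockA : Block (x1 34) (x1 33) (x1 24) (x1 26) :=
      Block.of_crossings h34 h35 h36 h37 h38 h39 h40 h41 h42 h43 h44 h45
    rw [e34, e33] at blockA
    have e26 : x1 26 = x1 27 := blockA.eq_of_diag.2
    have s : x1 27 = op (x1 27) (x1 27) := (op_self _).symm
    have clasp3 : x1 2 = op (x1 2) (x1 27) := by rw [e2, op_of_form_eq_zero clasp']
    have clasp28 : x1 27 = op (x1 27) (x1 2) := by rw [e2, op_of_form_eq_zero clasp]
    have self26 : x1 26 = op (x1 27) (x1 27) := e26.trans s
    have h44' : x1 27 = op (x1 44) (x1 39) := e26.symm.trans h44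
    refine ⟨?_, ?_, ?_, ?_, ?_, ?_, ?_, ?_, ?_, ?_, ?_, ?_, ?_, ?_, ?_, ?_, ?_, ?_, ?_, ?_, ?_, ?_,
      ?_, ?_, ?_, ?_, ?_, ?_, ?_, ?_, ?_, ?_, ?_, ?_, ?_, ?_, ?_, ?_, ?_, ?_, ?_, ?_, ?_, ?_, ?_,
      ?_, ?_, ?_, ?_, ?_, ?_, ?_, ?_, ?_, ?_, ?_, ?_, ?_, ?_, ?_, ?_, ?_, ?_, ?_, ?_, ?_, ?_, ?_,
      ?_, ?_, ?_, ?_, ?_, ?_, ?_, ?_, ?_, ?_, ?_, ?_, ?_, ?_, ?_, ?_, ?_⟩ <;>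
      first | exact s | assumption
  · ext v
    simp only [Finset.mem_image, Finset.mem_univ, true_and]
    constructor
    · rintro ⟨i, rfl⟩
      unfold extend
      split_ifs
      exacts [⟨_, rfl⟩, ⟨_, rfl⟩, ⟨_, rfl⟩]
    · rintro ⟨i, rfl⟩
      exact ⟨Fin.castLE (by norm_num) i, by simp [extend]⟩
end
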